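/- Let G be a connected graph of order n and let k and λ be positive integers with k ≥ 2. If λ ≥ n/(k+1), then t_k ≥ t_{k+1} − λ + 1. (Corollary 1) -/

import Mathlib

open SimpleGraph

variable {V : Type*}

/-- A set of vertices is independent in `G`. -/
def IsIndSet (G : SimpleGraph V) (s : Set V) : Prop :=
  ∀ ⦃u⦄, u ∈ s → ∀ ⦃v⦄, v ∈ s → ¬ G.Adj u v

/-- The number of end-vertices (vertices of degree one) of a subgraph `H`. -/
noncomputable def endVertexCount {G : SimpleGraph V} (H : G.Subgraph) : ℕ :=
  {v : V | v ∈ H.verts ∧ (H.neighborSet v).ncard = 1}.ncard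

/-- `H` is a cycle; a single vertex and a single edge are regarded as
simple cycles of orders 1 and 2, respectively. -/
def IsCycleSubgraph {G : SimpleGraph V} (H : G.Subgraph) : Prop :=
  H.Connected ∧ (H.verts.ncard ≤ 2 ∨ ∀ v ∈ H.verts, (H.neighborSet v).ncard = 2)

/-- `H` is a `k`-ended tree in `G`: a tree with at most `k` end-vertices (leaves);
a cycle is regarded as a 1-ended tree. -/
def IsKEndedTree (G : SimpleGraph V) (k : ℕ) (H : G.Subgraph) : Prop :=
  (H.coe.IsTree ∧ endVertexCount H ≤ k) ∨ (1 ≤ k ∧ IsCycleSubgraph H)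

/-- `t k`: the order of a largest `k`-ended tree in `G`. -/
noncomputable def maxKEndedOrder (G : SimpleGraph V) (k : ℕ) : ℕ :=
  sSup {n | ∃ H : G.Subgraph, IsKEndedTree G k H ∧ H.verts.ncard = n}

/-- `σ m`: the minimum degree sum over independent sets of `m` vertices of `G`,
and `+∞` if the independence number of `G` is less than `m`. -/
noncomputable def minDegreeSum (G : SimpleGraph V) [Fintype V] [DecidableRel G.Adj]
    (m : ℕ) : ℕ∞ :=
  ⨅ s ∈ {s : Finset V | s.card = m ∧ IsIndSet G ↑s}, (∑ v ∈ s, G.degree v : ℕ∞)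

/-! Let `T` be a tree with `m ≥ 3` ends and, for each end `v`, let `K v` be a minimal subtree
containing all the other ends; by minimality every end of `K v` is an end of `T` other than `v`.
For `v ≠ w` the union of `K v` and `K w` is a subtree containing every end, hence all of `T`, so
the complements of the `K v` are pairwise disjoint. Since every edge of `T` is a bridge, the `K v`
have a common vertex, so these `m` complements do not cover `T` and one of them has fewer than
`|T| / m` vertices. With `m = k + 1` this gives `k t_{k+1} < (k + 1) t_k`. -/

lemma exists_card_mul_ncard_lt_of_pairwise_disjoint {ι α : Type*} [Finite ι] [Nonempty ι]
    {D : ι → Set α} {s : Set α} (hs : s.Finite) (hD : Pairwise (Function.onFun Disjoint D))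
    (hDs : ⋃ i, D i ⊂ s) : ∃ i, Nat.card ι * (D i).ncard < s.ncard := by
  have := Fintype.ofFinite ι
  obtain ⟨i, -, hmin⟩ := Finset.univ.exists_min_image (fun i => (D i).ncard) Finset.univ_nonempty
  refine ⟨i, ?_⟩
  calc Nat.card ι * (D i).ncard = Finset.univ.card • (D i).ncard := by
        rw [Nat.card_eq_fintype_card, Finset.card_univ, smul_eq_mul]
    _ ≤ ∑ j, (D j).ncard := Finset.card_nsmul_le_sum _ _ _ hmin
    _ = (⋃ j, D j).ncard := by
        rw [Set.ncard_iUnion_of_finite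
          (fun j => hs.subset ((Set.subset_iUnion D j).trans hDs.subset)) hD,
          finsum_eq_sum_of_fintype]
    _ < s.ncard := Set.ncard_lt_ncard hDs hs

section Subtrees

variable {G : SimpleGraph V} {H K K₁ K₂ : G.Subgraph}

/-- The set of end-vertices of a subgraph `H`, whose cardinality is `endVertexCount H`. -/
def endVertices (H : G.Subgraph) : Set V :=
  {v | v ∈ H.verts ∧ (H.neighborSet v).ncard = 1}

lemma ncard_endVertices (H : G.Subgraph) : (endVertices H).ncard = endVertexCount H := rfl

lemma isTree_coe_of_le (hH : H.coe.IsAcyclic) (hKH : K ≤ H) (hK : K.Connected) : K.coe.IsTree :=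
  ⟨hK.coe, hH.comap (Subgraph.inclusion hKH) (Subgraph.inclusion.injective hKH)⟩

lemma exists_adj_mem_notMem_of_preconnected (hH : H.Preconnected) {s : Set V} {u v : V}
    (hu : u ∈ H.verts) (hus : u ∈ s) (hv : v ∈ H.verts) (hvs : v ∉ s) :
    ∃ x ∈ s, ∃ y ∉ s, H.Adj x y := by
  obtain ⟨p⟩ := hH ⟨u, hu⟩ ⟨v, hv⟩
  obtain ⟨d, -, hfst, hsnd⟩ := p.exists_boundary_dart (Subtype.val ⁻¹' s) hus hvs
  exact ⟨d.fst, hfst, d.snd, hsnd, d.adj⟩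

lemma exists_adj_ne_of_notMem_endVertices {x y : V} (hxy : H.Adj x y) (hx : x ∉ endVertices H) :
    ∃ z ≠ y, H.Adj x z := by
  by_contra! h
  refine hx ⟨hxy.fst_mem, Set.ncard_eq_one.2 ⟨y, Set.eq_singleton_iff_unique_mem.2 ⟨hxy, ?_⟩⟩⟩
  exact fun z hxz => by_contra fun hzy => h z hzy hxz

lemma connected_deleteVerts_singleton (hH : H.Connected) {x : V} (hx : x ∈ endVertices H) :
    (H.deleteVerts {x}).Connected := by
  obtain ⟨y, hy⟩ := Set.ncard_eq_one.1 hx.2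
  have hxy : H.Adj x y := hy.ge rfl
  refine Subgraph.connected_iff.2 ⟨⟨?_⟩, y, hxy.snd_mem, hxy.ne.symm⟩
  rw [(Subgraph.coeDeleteVertsIso {x}).preconnected_iff]
  refine hH.coe.preconnected.induce_of_degree_eq_one fun v hv a ha b hb => Subtype.ext ?_
  obtain rfl : (v : V) = x := by simpa using hv
  exact (hy.le ha).trans (hy.le hb).symm

lemma exists_walk_coe_support_subset (hKH : K ≤ H) (hK : K.Preconnected) {u v : V}
    (hu : u ∈ K.verts) (hv : v ∈ K.verts) :
    ∃ p : H.coe.Walk ⟨u, hKH.1 hu⟩ ⟨v, hKH.1 hv⟩, ∀ w ∈ p.support, (w : V) ∈ K.verts := by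
  obtain ⟨p⟩ := hK ⟨u, hu⟩ ⟨v, hv⟩
  refine ⟨p.map (Subgraph.inclusion hKH), fun w hw => ?_⟩
  obtain ⟨v, -, rfl⟩ := List.mem_map.1 (Walk.support_map (Subgraph.inclusion hKH) p ▸ hw)
  exact v.2

lemma not_adj_of_mem_verts_sdiff (hH : H.coe.IsAcyclic) (hK₁H : K₁ ≤ H) (hK₂H : K₂ ≤ H)
    (hK₁ : K₁.Preconnected) (hK₂ : K₂.Preconnected) (hne : (K₁ ⊓ K₂).verts.Nonempty) {x y : V}
    (hx : x ∈ K₁.verts \ K₂.verts) (hy : y ∈ K₂.verts \ K₁.verts) : ¬ H.Adj x y := by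
  intro hxy
  obtain ⟨z, hz₁, hz₂⟩ := hne
  obtain ⟨p, hp⟩ := exists_walk_coe_support_subset hK₁H hK₁ hx.1 hz₁
  obtain ⟨q, hq⟩ := exists_walk_coe_support_subset hK₂H hK₂ hz₂ hy.1
  have hbridge := isAcyclic_iff_forall_adj_isBridge.1 hH hxy.coe
  have hmem := isBridge_iff_forall_walk_mem_edges.1 hbridge (p.append q)
  rw [Walk.edges_append, List.mem_append] at hmem
  rcases hmem with hmem | hmem
  · exact hy.2 (hp _ (p.snd_mem_support_of_mem_edges hmem))
  · exact hx.2 (hq _ (q.fst_mem_support_of_mem_edges hmem))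

lemma exists_forall_mem_verts_of_isTree {ι : Type*} {K : ι → G.Subgraph} (hH : H.coe.IsTree)
    (hKH : ∀ i, K i ≤ H) (hK : ∀ i, (K i).Connected)
    (hinter : Pairwise fun i j => (K i ⊓ K j).verts.Nonempty)
    (hunion : Pairwise fun i j => (K i ⊔ K j).verts = H.verts) :
    ∃ x ∈ H.verts, ∀ i, x ∈ (K i).verts := by
  by_contra! hmiss
  obtain ⟨u, hu⟩ := hH.connected.nonempty
  obtain ⟨i, hui⟩ := hmiss u hu
  obtain ⟨v, hv⟩ := (hK i).nonempty
  obtain ⟨x, hx, y, hy, hxy⟩ :=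
    exists_adj_mem_notMem_of_preconnected ⟨hH.connected.preconnected⟩ ((hKH i).1 hv) hv hu hui
  obtain ⟨j, hxj⟩ := hmiss x hxy.fst_mem
  have hij : i ≠ j := fun h => hxj (h ▸ hx)
  have hyj : y ∈ (K j).verts := ((hunion hij).ge hxy.snd_mem).resolve_left hy
  exact not_adj_of_mem_verts_sdiff hH.isAcyclic (hKH i) (hKH j) (hK i).preconnected
    (hK j).preconnected (hinter hij) ⟨hx, hxj⟩ ⟨hyj, hy⟩ hxy

lemma inf_verts_nonempty_of_endVertices_sdiff_subset (hends : 3 ≤ (endVertices H).ncard) {v w : V}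
    (hv : endVertices H \ {v} ⊆ K₁.verts) (hw : endVertices H \ {w} ⊆ K₂.verts) :
    (K₁ ⊓ K₂).verts.Nonempty := by
  have hlt : ({v, w} : Set V).ncard < (endVertices H).ncard := by
    grw [Set.ncard_insert_le, Set.ncard_singleton]
    exact hends
  obtain ⟨u, hu, huvw⟩ := Set.exists_mem_notMem_of_ncard_lt_ncard hlt
  exact ⟨u, hv ⟨hu, fun h => huvw (.inl h)⟩, hw ⟨hu, fun h => huvw (.inr h)⟩⟩

variable [Finite V]

lemma exists_connected_le_endVertices_subset (hH : H.Connected) {A : Set V} (hA : A ⊆ H.verts) :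
    ∃ K ≤ H, K.Connected ∧ A ⊆ K.verts ∧ endVertices K ⊆ A := by
  obtain ⟨K, hKH, ⟨hK, hAK⟩, hmin⟩ := exists_minimal_le_of_wellFoundedLT
    (fun K : G.Subgraph => K.Connected ∧ A ⊆ K.verts) H ⟨hH, hA⟩
  refine ⟨K, hKH, hK, hAK, fun x hx => by_contra fun hxA => ?_⟩
  have hdel : A ⊆ (K.deleteVerts {x}).verts :=
    fun a ha => ⟨hAK ha, fun hax => hxA (hax ▸ ha)⟩
  have hle := hmin ⟨connected_deleteVerts_singleton hK hx, hdel⟩ Subgraph.deleteVerts_le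
  exact (hle.1 hx.1).2 rfl

lemma verts_eq_of_endVertices_subset (hH : H.coe.IsTree) (hKH : K ≤ H) (hK : K.Connected)
    (hends : endVertices H ⊆ K.verts) : K.verts = H.verts := by
  -- A maximal proper connected `M ≥ K` omits only one vertex `y`. Since `y` is not an end-vertex,
  -- it has two neighbours in `M`, which closes a cycle.
  by_contra hne
  obtain ⟨M, hKM, ⟨hMH, hM, hMne⟩, hmax⟩ := exists_maximal_ge_of_wellFoundedGT
    (fun M : G.Subgraph => M ≤ H ∧ M.Connected ∧ M.verts ≠ H.verts) K ⟨hKH, hK, hne⟩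
  obtain ⟨u, hu⟩ := hM.nonempty
  obtain ⟨v, hv, hvM⟩ := Set.exists_of_ssubset (hMH.1.ssubset_of_ne hMne)
  obtain ⟨x, hx, y, hy, hxy⟩ :=
    exists_adj_mem_notMem_of_preconnected ⟨hH.connected.preconnected⟩ (hMH.1 hu) hu hv hvM
  obtain ⟨z, hzx, hyz⟩ :=
    exists_adj_ne_of_notMem_endVertices hxy.symm fun h => hy (hKM.1 (hends h))
  have hfill : (M ⊔ G.subgraphOfAdj hxy.adj_sub).verts = H.verts := by
    by_contra hne'
    have hconn : (M ⊔ G.subgraphOfAdj hxy.adj_sub).Connected :=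
      Subgraph.connected_sup hM.preconnected (Subgraph.subgraphOfAdj_connected _).preconnected
        ⟨x, hx, .inl rfl⟩
    have hle := hmax ⟨sup_le hMH (subgraphOfAdj_le_of_adj H hxy), hconn, hne'⟩ le_sup_left
    exact hy (hle.1 (.inr (.inr rfl)))
  have hzM : z ∈ M.verts :=
    (hfill.ge hyz.snd_mem).resolve_right fun h => h.elim hzx hyz.ne.symm
  refine not_adj_of_mem_verts_sdiff hH.isAcyclic hMH (subgraphOfAdj_le_of_adj H hyz)
    hM.preconnected (Subgraph.subgraphOfAdj_connected hyz.adj_sub).preconnected ⟨z, hzM, .inr rfl⟩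
    ⟨hx, fun h => h.elim hxy.ne hzx.symm⟩ ⟨.inl rfl, hy⟩ hxy

lemma sup_verts_eq_of_endVertices_sdiff_subset (hH : H.coe.IsTree) (hK₁H : K₁ ≤ H) (hK₂H : K₂ ≤ H)
    (hK : (K₁ ⊔ K₂).Connected) {v w : V} (hvw : v ≠ w) (hv : endVertices H \ {v} ⊆ K₁.verts)
    (hw : endVertices H \ {w} ⊆ K₂.verts) : (K₁ ⊔ K₂).verts = H.verts := by
  refine verts_eq_of_endVertices_subset hH (sup_le hK₁H hK₂H) hK fun u hu => ?_
  obtain rfl | huv := eq_or_ne u v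
  · exact .inr (hw ⟨hu, hvw⟩)
  · exact .inl (hv ⟨hu, huv⟩)

lemma exists_isTree_le_ncard_endVertices_lt (hH : H.coe.IsTree)
    (hends : 3 ≤ (endVertices H).ncard) :
    ∃ K ≤ H, K.coe.IsTree ∧ (endVertices K).ncard < (endVertices H).ncard ∧
      (endVertices H).ncard * (H.verts \ K.verts).ncard < H.verts.ncard := by
  choose K hKH hK hendsH hendsK using fun v : endVertices H =>
    exists_connected_le_endVertices_subset (A := endVertices H \ {↑v}) ⟨hH.connected⟩
      fun _ hw => hw.1.1
  have hinter (v w) : (K v ⊓ K w).verts.Nonempty :=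
    inf_verts_nonempty_of_endVertices_sdiff_subset hends (hendsH v) (hendsH w)
  have hunion : Pairwise fun v w => (K v ⊔ K w).verts = H.verts := fun v w hvw =>
    sup_verts_eq_of_endVertices_sdiff_subset hH (hKH v) (hKH w)
      (Subgraph.connected_sup (hK v).preconnected (hK w).preconnected (hinter v w))
      (Subtype.coe_ne_coe.2 hvw) (hendsH v) (hendsH w)
  have hdisj : Pairwise (Function.onFun Disjoint fun v => H.verts \ (K v).verts) :=
    fun v w hvw => Set.disjoint_left.2 fun x hxv hxw =>
      ((hunion hvw).ge hxv.1).elim hxv.2 hxw.2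
  obtain ⟨x, hx, hxK⟩ :=
    exists_forall_mem_verts_of_isTree hH hKH hK (fun v w _ => hinter v w) hunion
  have hssub : ⋃ v, H.verts \ (K v).verts ⊂ H.verts :=
    (Set.iUnion_subset fun v => Set.sdiff_subset).ssubset_of_mem_notMem hx (by simp [hxK])
  have : Nonempty (endVertices H) := (Set.nonempty_of_ncard_ne_zero (by lia)).to_subtype
  obtain ⟨v, hv⟩ := exists_card_mul_ncard_lt_of_pairwise_disjoint (Set.toFinite _) hdisj hssub
  refine ⟨K v, hKH v, isTree_coe_of_le hH.isAcyclic (hKH v) (hK v), ?_, hv⟩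
  have hendsKH : endVertices (K v) ⊂ endVertices H :=
    ((hendsK v).trans Set.sdiff_subset).ssubset_of_mem_notMem v.2 fun h => (hendsK v h).2 rfl
  exact Set.ncard_lt_ncard hendsKH

end Subtrees

section MaxKEndedOrder

variable {G : SimpleGraph V} {k : ℕ}

lemma isKEndedTree_singletonSubgraph (G : SimpleGraph V) (hk : 1 ≤ k) (v : V) :
    IsKEndedTree G k (G.singletonSubgraph v) :=
  .inr ⟨hk, Subgraph.singletonSubgraph_connected, .inl (by simp)⟩

lemma IsKEndedTree.or_endVertexCount_eq_of_succ (hk : 1 ≤ k) {H : G.Subgraph}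
    (hH : IsKEndedTree G (k + 1) H) :
    IsKEndedTree G k H ∨ H.coe.IsTree ∧ endVertexCount H = k + 1 := by
  obtain ⟨hT, hends⟩ | ⟨-, hcycle⟩ := hH
  · exact (Nat.le_or_eq_of_le_succ hends).imp (fun h => .inl ⟨hT, h⟩) fun h => ⟨hT, h⟩
  · exact .inl (.inr ⟨hk, hcycle⟩)

variable [Finite V]

lemma card_mem_upperBounds_ncard_verts (G : SimpleGraph V) (k : ℕ) :
    Nat.card V ∈ upperBounds {n | ∃ H : G.Subgraph, IsKEndedTree G k H ∧ H.verts.ncard = n} := by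
  rintro _ ⟨H, -, rfl⟩
  exact Set.ncard_le_card _

lemma maxKEndedOrder_le_card (G : SimpleGraph V) (k : ℕ) : maxKEndedOrder G k ≤ Nat.card V :=
  csSup_le' (card_mem_upperBounds_ncard_verts G k)

lemma IsKEndedTree.ncard_verts_le_maxKEndedOrder {H : G.Subgraph} (hH : IsKEndedTree G k H) :
    H.verts.ncard ≤ maxKEndedOrder G k :=
  le_csSup ⟨_, card_mem_upperBounds_ncard_verts G k⟩ ⟨H, hH, rfl⟩

lemma exists_isKEndedTree_ncard_verts_eq [Nonempty V] (G : SimpleGraph V) (hk : 1 ≤ k) :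
    ∃ H : G.Subgraph, IsKEndedTree G k H ∧ H.verts.ncard = maxKEndedOrder G k :=
  Nat.sSup_mem (s := {n | ∃ H : G.Subgraph, IsKEndedTree G k H ∧ H.verts.ncard = n})
    ⟨_, _, isKEndedTree_singletonSubgraph G hk (Classical.arbitrary V), rfl⟩
    ⟨_, card_mem_upperBounds_ncard_verts G k⟩

lemma maxKEndedOrder_pos [Nonempty V] (G : SimpleGraph V) (hk : 1 ≤ k) :
    0 < maxKEndedOrder G k := by
  simpa [Nat.one_le_iff_ne_zero, Nat.pos_iff_ne_zero] using
    (isKEndedTree_singletonSubgraph G hk (Classical.arbitrary V)).ncard_verts_le_maxKEndedOrder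

lemma mul_ncard_verts_lt_mul_maxKEndedOrder (hk : 2 ≤ k) {H : G.Subgraph} (hH : H.coe.IsTree)
    (hends : endVertexCount H = k + 1) :
    k * H.verts.ncard < (k + 1) * maxKEndedOrder G k := by
  rw [← ncard_endVertices] at hends
  obtain ⟨K, hKH, hK, hlt, hcard⟩ := exists_isTree_le_ncard_endVertices_lt hH (by lia)
  rw [hends] at hlt hcard
  have hKk : IsKEndedTree G k K := .inl ⟨hK, Nat.le_of_lt_succ hlt⟩
  have hle := hKk.ncard_verts_le_maxKEndedOrder
  have hsum := Set.ncard_sdiff_add_ncard_of_subset hKH.1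
  nlinarith

theorem mul_maxKEndedOrder_succ_lt [Nonempty V] (G : SimpleGraph V) (hk : 2 ≤ k) :
    k * maxKEndedOrder G (k + 1) < (k + 1) * maxKEndedOrder G k := by
  obtain ⟨H, hH, hmax⟩ := exists_isKEndedTree_ncard_verts_eq G (k := k + 1) (by lia)
  rw [← hmax]
  obtain hHk | ⟨hT, hends⟩ := hH.or_endVertexCount_eq_of_succ (by lia)
  · have := hHk.ncard_verts_le_maxKEndedOrder
    have := maxKEndedOrder_pos G (k := k) (by lia)
    nlinarith
  · exact mul_ncard_verts_lt_mul_maxKEndedOrder hk hT hends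

theorem corollary1_general [Nonempty V] (G : SimpleGraph V) (k l : ℕ) (hk : 2 ≤ k)
    (h : (maxKEndedOrder G (k + 1) : ℚ) / (k + 1) ≤ l) :
    maxKEndedOrder G k + l ≥ maxKEndedOrder G (k + 1) + 1 := by
  have hratio := mul_maxKEndedOrder_succ_lt G hk
  have hl : maxKEndedOrder G (k + 1) ≤ l * (k + 1) := by
    rw [div_le_iff₀ (by positivity)] at h
    exact_mod_cast h
  have : (k + 1) * maxKEndedOrder G (k + 1) < (k + 1) * (maxKEndedOrder G k + l) := by
    linarith
  exact Nat.lt_of_mul_lt_mul_left this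

end MaxKEndedOrder

/-- **Corollary 1.** If `G` is connected of order `n`, `k ≥ 2`, `λ ≥ 1` and
`λ ≥ n/(k+1)`, then `t_k ≥ t_{k+1} - λ + 1`. -/
theorem corollary1 [Fintype V] (G : SimpleGraph V) (hG : G.Connected)
    (k l : ℕ) (hk : 2 ≤ k) (hl : 1 ≤ l)
    (h : (Fintype.card V : ℚ) / (k + 1) ≤ l) :
    maxKEndedOrder G k + l ≥ maxKEndedOrder G (k + 1) + 1 := by
  have := hG.nonempty
  refine corollary1_general G k l hk (le_trans ?_ h)
  grw [maxKEndedOrder_le_card G (k + 1), Nat.card_eq_fintype_card]
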